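/- Let N ≥ 2, let B ⊂ ℝ^N be a bounded radial domain and set I = closure{|x| : x ∈ B}. Let f : I × ℝ → ℝ, (r,u) ↦ f(r,u), be continuous in r and locally Lipschitz in u uniformly with respect to r. Let u ∈ C(B̄) ∩ C²(B) be a classical solution of the elliptic problem −Δu = f(|x|,u) in B, u = 0 on ∂B, such that there is e ∈ S with u(x) ≥ u(σ_e(x)) for all x ∈ B(e) and u ∘ σ_e ≢ u on B(e). Then u is foliated Schwarz symmetric with respect to some p ∈ S. -/

import Mathlib

/-!
The proof is a rotating plane argument for the differences `w_e = u - u ∘ σ_e`, which satisfy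
`|Δw_e| ≤ L|w_e|` in `B` because `f` is Lipschitz on the range of `u`.

* Strong maximum principle (`strong_max_principle`, `RotSetup.pos_or_eq`): if `w_e ≥ 0` on the
  connected set `B(e)`, then `w_e > 0` there or `w_e ≡ 0`. In particular the given direction `e₀`
  satisfies `w_{e₀} > 0` on `B(e₀)`.
* Openness (`RotSetup.eventually_domPos`): the set of `e` with `w_e > 0` on `B(e)` is open in the
  sphere. With an explicit supersolution `g` in a boundary layer of `B(e)`
  (`exists_layer_barrier`), a negative minimum of `w_e / g` has a uniformly positive distance to
  `∂B(e)`, so such minima for `e → e₀` would accumulate at an interior point with `w_{e₀} ≤ 0`.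
* Circles (`RotSetup.domNonneg_or_neg`): in a great circle through `e₀` the maximal arc of
  directions with `w_e > 0` has endpoints at which `w_e ≡ 0`. If its length `ℓ` were less than `π`,
  the composition of the two endpoint symmetries, a rotation by `2ℓ`, would leave `u` invariant,
  which contradicts the strict inequality at the midpoint of the arc. Hence every `e` satisfies
  `w_e ≥ 0` or `w_{-e} ≥ 0` on the respective half domain.
* Axis (`RotSetup.foliated`): let `p` point to a maximum of `u` on a sphere inside `B`. Then
  `w_e ≥ 0` on `B(e)` whenever `e·p ≥ 0`, and for `|x| = |y|`, `x·p ≥ y·p` the reflection in the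
  direction `x - y` gives `u(x) ≥ u(y)`.
-/

open Set Metric Filter
open scoped RealInnerProductSpace

noncomputable section

variable {N : ℕ}

/-- Reflection through the hyperplane `H(e) = {x : ⟪x,e⟫ = 0}`:
`σ_e(x) = x - 2 (x·e) e`. -/
def reflHyp (e x : EuclideanSpace ℝ (Fin N)) : EuclideanSpace ℝ (Fin N) :=
  x - (2 * ⟪x, e⟫) • e

/-- The half domain `B(e) = {x ∈ B : x·e > 0}`. -/
def halfDom (B : Set (EuclideanSpace ℝ (Fin N))) (e : EuclideanSpace ℝ (Fin N)) :
    Set (EuclideanSpace ℝ (Fin N)) := {x ∈ B | 0 < ⟪x, e⟫}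

/-- A (bounded) radial domain: an open ball or an open annulus centered at the origin. -/
def IsRadialDomain (B : Set (EuclideanSpace ℝ (Fin N))) : Prop :=
  (∃ R, 0 < R ∧ B = Metric.ball 0 R) ∨
  (∃ r R, 0 < r ∧ r < R ∧ B = {x : EuclideanSpace ℝ (Fin N) | r < ‖x‖ ∧ ‖x‖ < R})

/-- `u` is foliated Schwarz symmetric on `D` with respect to the unit vector `p`:
`u(x) ≥ u(y)` whenever `|x| = |y|` and `x·p ≥ y·p`.  (This is equivalent to axial
symmetry with respect to `ℝp` together with monotonicity in the polar angle.) -/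
def FoliatedSchwarzOn (D : Set (EuclideanSpace ℝ (Fin N)))
    (u : EuclideanSpace ℝ (Fin N) → ℝ) (p : EuclideanSpace ℝ (Fin N)) : Prop :=
  ∀ x ∈ D, ∀ y ∈ D, ‖x‖ = ‖y‖ → ⟪y, p⟫ ≤ ⟪x, p⟫ → u y ≤ u x

/-- The omega limit set of a (bounded) solution `u = u(x,t)`: all continuous
functions `z` on `B̄` which are uniform limits on `B̄` of `u(·, tₙ)` for some
sequence `tₙ → ∞`. -/
def omegaLimitSet (B : Set (EuclideanSpace ℝ (Fin N)))
    (u : EuclideanSpace ℝ (Fin N) → ℝ → ℝ) : Set (EuclideanSpace ℝ (Fin N) → ℝ) :=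
  {z | ContinuousOn z (closure B) ∧ ∃ t : ℕ → ℝ, Tendsto t atTop atTop ∧
    ∀ ε > 0, ∃ n₀ : ℕ, ∀ n ≥ n₀, ∀ x ∈ closure B, |u x (t n) - z x| ≤ ε}

/-! ### Reflections -/

lemma reflHyp_norm {e : EuclideanSpace ℝ (Fin N)} (he : ‖e‖ = 1)
    (x : EuclideanSpace ℝ (Fin N)) : ‖reflHyp e x‖ = ‖x‖ := by
  have h : ‖reflHyp e x‖ ^ 2 = ‖x‖ ^ 2 := by
    rw [reflHyp, norm_sub_sq_real, inner_smul_right, norm_smul, he, Real.norm_eq_abs, mul_one,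
      sq_abs]
    ring
  exact (sq_eq_sq₀ (norm_nonneg _) (norm_nonneg _)).1 h

lemma reflHyp_inner {e : EuclideanSpace ℝ (Fin N)} (he : ‖e‖ = 1)
    (x : EuclideanSpace ℝ (Fin N)) : ⟪reflHyp e x, e⟫ = -⟪x, e⟫ := by
  rw [reflHyp, inner_sub_left, real_inner_smul_left, real_inner_self_eq_norm_sq, he]
  ring

lemma reflHyp_invol {e : EuclideanSpace ℝ (Fin N)} (he : ‖e‖ = 1)
    (x : EuclideanSpace ℝ (Fin N)) : reflHyp e (reflHyp e x) = x := by
  conv_lhs => rw [reflHyp, reflHyp_inner he, reflHyp]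
  module

lemma reflHyp_neg (e x : EuclideanSpace ℝ (Fin N)) : reflHyp (-e) x = reflHyp e x := by
  simp [reflHyp]

lemma reflHyp_of_inner_eq_zero {e x : EuclideanSpace ℝ (Fin N)} (h : ⟪x, e⟫ = 0) :
    reflHyp e x = x := by
  simp [reflHyp, h]

lemma continuous_reflHyp : Continuous
    fun q : EuclideanSpace ℝ (Fin N) × EuclideanSpace ℝ (Fin N) => reflHyp q.1 q.2 := by
  unfold reflHyp
  fun_prop

/-! ### Pointwise Laplacians and the second derivative test -/

/-- `HasLap w x ℓ`: along each coordinate line through `x` the function `w` is differentiable near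
`x` and twice differentiable at `x`, and the pure second partial derivatives sum to `ℓ`. This weak
pointwise notion of `Δw(x) = ℓ` is all that comparison at an interior minimum uses. -/
def HasLap (w : EuclideanSpace ℝ (Fin N) → ℝ) (x : EuclideanSpace ℝ (Fin N)) (l : ℝ) : Prop :=
  ∃ a : Fin N → ℝ, ∑ i, a i = l ∧ ∀ i, ∃ d : ℝ → ℝ,
    (∀ᶠ t in nhds (0 : ℝ),
      HasDerivAt (fun t : ℝ => w (x + t • EuclideanSpace.single i 1)) (d t) t) ∧
    HasDerivAt d (a i) 0

lemma HasLap.add {v w : EuclideanSpace ℝ (Fin N) → ℝ} {x : EuclideanSpace ℝ (Fin N)} {k l : ℝ}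
    (hv : HasLap v x k) (hw : HasLap w x l) : HasLap (fun y => v y + w y) x (k + l) := by
  obtain ⟨a, rfl, ha⟩ := hv
  obtain ⟨b, rfl, hb⟩ := hw
  refine ⟨fun i => a i + b i, Finset.sum_add_distrib, fun i => ?_⟩
  obtain ⟨d, hd, hd'⟩ := ha i
  obtain ⟨c, hc, hc'⟩ := hb i
  refine ⟨fun t => d t + c t, ?_, hd'.add hc'⟩
  filter_upwards [hd, hc] with t h1 h2 using h1.add h2

lemma HasLap.const_mul {w : EuclideanSpace ℝ (Fin N) → ℝ} {x : EuclideanSpace ℝ (Fin N)} {l : ℝ}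
    (c : ℝ) (hw : HasLap w x l) : HasLap (fun y => c * w y) x (c * l) := by
  obtain ⟨b, rfl, hb⟩ := hw
  refine ⟨fun i => c * b i, Finset.mul_sum _ _ _ |>.symm, fun i => ?_⟩
  obtain ⟨d, hd, hd'⟩ := hb i
  refine ⟨fun t => c * d t, ?_, hd'.const_mul c⟩
  filter_upwards [hd] with t h1 using h1.const_mul c

lemma hasLap_const (c : ℝ) (x : EuclideanSpace ℝ (Fin N)) :
    HasLap (fun _ => c) x 0 := by
  refine ⟨fun _ => 0, by simp, fun i => ⟨fun _ => 0, ?_, hasDerivAt_const _ _⟩⟩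
  exact Eventually.of_forall fun t => hasDerivAt_const _ _

/-- Laplacian of `exp ∘ q` when `q` restricts to a quadratic polynomial with leading coefficient
`c` on every coordinate line through `x`; all barriers below are built from such functions. -/
lemma hasLap_exp (q : EuclideanSpace ℝ (Fin N) → ℝ) (x : EuclideanSpace ℝ (Fin N))
    (b : Fin N → ℝ) (c : ℝ)
    (hq : ∀ i (t : ℝ), q (x + t • EuclideanSpace.single i 1) = q x + b i * t + c * t ^ 2) :
    HasLap (fun y => Real.exp (q y)) x ((∑ i, b i ^ 2 + 2 * N * c) * Real.exp (q x)) := by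
  refine ⟨fun i => (b i ^ 2 + 2 * c) * Real.exp (q x), ?_, fun i => ?_⟩
  · rw [← Finset.sum_mul, Finset.sum_add_distrib]
    simp
    ring
  · have hpoly : ∀ t : ℝ, HasDerivAt (fun t : ℝ => q x + b i * t + c * t ^ 2)
        (b i + 2 * c * t) t := fun t => by
      have := (((hasDerivAt_id t).const_mul (b i)).const_add (q x)).add
        (((hasDerivAt_id t).pow 2).const_mul c)
      refine this.congr_deriv ?_
      simp
      ring
    refine ⟨fun t => Real.exp (q x + b i * t + c * t ^ 2) * (b i + 2 * c * t), ?_, ?_⟩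
    · refine Eventually.of_forall fun t => ?_
      simp only [hq]
      exact (hpoly t).exp
    · have h2 : HasDerivAt (fun t : ℝ => b i + 2 * c * t) (2 * c) 0 := by
        simpa using ((hasDerivAt_id (0 : ℝ)).const_mul (2 * c)).const_add (b i)
      have := ((hpoly 0).exp).mul h2
      refine this.congr_deriv ?_
      simp
      ring

lemma second_deriv_nonneg_of_isLocalMin {φ d : ℝ → ℝ} {a : ℝ} (hmin : IsLocalMin φ 0)
    (hφ : ∀ᶠ t in nhds (0 : ℝ), HasDerivAt φ (d t) t) (hd : HasDerivAt d a 0) : 0 ≤ a := by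
  by_contra! ha
  have hderiv : deriv φ =ᶠ[nhds 0] d := by
    filter_upwards [hφ] with t ht using ht.deriv
  have hdd : deriv (deriv φ) 0 = a := by rw [hderiv.deriv_eq, hd.deriv]
  have hmax : IsLocalMax φ 0 :=
    isLocalMax_of_deriv_deriv_neg (by rw [hdd]; exact ha) hmin.deriv_eq_zero
      hφ.self_of_nhds.continuousAt
  -- being both a minimum and a maximum, `φ` is locally constant
  have hconst : φ =ᶠ[nhds 0] fun _ => φ 0 := by
    filter_upwards [hmin, hmax] with t h1 h2 using le_antisymm h2 h1
  have : deriv (deriv φ) 0 = 0 := by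
    rw [hconst.deriv.deriv_eq]
    simp
  linarith

lemma HasLap.nonneg_of_isLocalMin {w : EuclideanSpace ℝ (Fin N) → ℝ}
    {x : EuclideanSpace ℝ (Fin N)} {l : ℝ} (hw : HasLap w x l) (hmin : IsLocalMin w x) :
    0 ≤ l := by
  obtain ⟨a, rfl, ha⟩ := hw
  refine Finset.sum_nonneg fun i _ => ?_
  obtain ⟨d, hd, hd'⟩ := ha i
  refine second_deriv_nonneg_of_isLocalMin ?_ hd hd'
  have hc : Tendsto (fun t : ℝ => x + t • EuclideanSpace.single i (1 : ℝ)) (nhds 0) (nhds x) := by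
    have : Continuous (fun t : ℝ => x + t • EuclideanSpace.single i (1 : ℝ)) := by fun_prop
    simpa using this.tendsto 0
  have := hc.eventually hmin
  simpa [IsLocalMin, IsMinFilter] using this

lemma norm_line_sq (x y : EuclideanSpace ℝ (Fin N)) (i : Fin N) (t : ℝ) :
    ‖x + t • EuclideanSpace.single i (1 : ℝ) - y‖ ^ 2 =
      ‖x - y‖ ^ 2 + 2 * (x - y) i * t + t ^ 2 := by
  rw [add_sub_right_comm, norm_add_sq_real, inner_smul_right, norm_smul]
  simp [EuclideanSpace.inner_single_right]
  ring

lemma sum_sq_eq_norm_sq (x : EuclideanSpace ℝ (Fin N)) : ∑ i, x i ^ 2 = ‖x‖ ^ 2 := by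
  simp [EuclideanSpace.norm_sq_eq]

/-- `Δ exp(α|x - y|² + β) = (4α²|x - y|² + 2Nα) exp(α|x - y|² + β)`. -/
lemma hasLap_exp_norm_sq (α β : ℝ) (x y : EuclideanSpace ℝ (Fin N)) :
    HasLap (fun z => Real.exp (α * ‖z - y‖ ^ 2 + β)) x
      ((4 * α ^ 2 * ‖x - y‖ ^ 2 + 2 * N * α) * Real.exp (α * ‖x - y‖ ^ 2 + β)) := by
  have := hasLap_exp (fun z => α * ‖z - y‖ ^ 2 + β) x (fun i => 2 * α * (x - y) i) α
    (fun i t => by simp only [norm_line_sq]; ring)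
  convert this using 3
  rw [← sum_sq_eq_norm_sq, Finset.mul_sum]
  exact Finset.sum_congr rfl fun i _ => by ring

/-- `Δ exp(α x·e) = α² exp(α x·e)` for a unit vector `e`. -/
lemma hasLap_exp_inner (α : ℝ) {e : EuclideanSpace ℝ (Fin N)} (he : ‖e‖ = 1)
    (x : EuclideanSpace ℝ (Fin N)) :
    HasLap (fun z => Real.exp (α * ⟪z, e⟫)) x (α ^ 2 * Real.exp (α * ⟪x, e⟫)) := by
  have := hasLap_exp (fun z => α * ⟪z, e⟫) x (fun i => α * e i) 0
    (fun i t => by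
      simp only [inner_add_left, real_inner_smul_left, EuclideanSpace.inner_single_left]
      simp
      ring)
  convert this using 2
  simp only [mul_pow, ← Finset.mul_sum, sum_sq_eq_norm_sq, he]
  ring

/-! ### The strong maximum principle -/

/-- Positivity of a nonnegative supersolution of `Δw = Lw` spreads from a small ball to any
concentric larger one: compare `w` with a multiple of the barrier
`exp(-α|x - y|²) - exp(-αρ²)`, which is a strict subsolution off the small ball for large `α`. -/
lemma pos_on_ball_of_pos_on_smaller {w : EuclideanSpace ℝ (Fin N) → ℝ} {L r ρ : ℝ}
    {y : EuclideanSpace ℝ (Fin N)} (hL : 0 ≤ L) (hr : 0 < r) (hrρ : r < ρ)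
    (hc : ContinuousOn w (closedBall y ρ)) (hnn : ∀ x ∈ closedBall y ρ, 0 ≤ w x)
    (hpos : ∀ x ∈ closedBall y r, 0 < w x)
    (hlap : ∀ x ∈ ball y ρ, ∃ l, HasLap w x l ∧ l ≤ L * w x) :
    ∀ x ∈ ball y ρ, 0 < w x := by
  obtain ⟨xm, hxm, hm⟩ := (isCompact_closedBall y r).exists_isMinOn
    ⟨y, mem_closedBall_self hr.le⟩ (hc.mono (closedBall_subset_closedBall hrρ.le))
  set ε : ℝ := w xm / 2 with hε
  have hε0 : 0 < ε := half_pos (hpos xm hxm)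
  set α : ℝ := (N + L + 1) / r ^ 2 + 1 with hα
  have hN0 : (0 : ℝ) ≤ N := Nat.cast_nonneg N
  have hα1 : 1 ≤ α := by rw [hα]; have : 0 ≤ (N + L + 1) / r ^ 2 := by positivity
                         linarith
  have hαr : N + L + 1 ≤ α * r ^ 2 := by
    rw [hα, add_mul, div_mul_cancel₀ _ (by positivity)]
    nlinarith [sq_nonneg r]
  set κ : ℝ := Real.exp (-α * ρ ^ 2 + 0) with hκ
  have hκ0 : 0 < κ := Real.exp_pos _
  set v : EuclideanSpace ℝ (Fin N) → ℝ :=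
    fun z => w z + (-ε) * (Real.exp (-α * ‖z - y‖ ^ 2 + 0) + -κ) with hv
  have hvc : ContinuousOn v (closedBall y ρ) := by
    refine hc.add (Continuous.continuousOn ?_)
    fun_prop
  obtain ⟨x₁, hx₁, hmin⟩ := (isCompact_closedBall y ρ).exists_isMinOn
    ⟨y, mem_closedBall_self (hr.trans hrρ).le⟩ hvc
  have hv1 : 0 ≤ v x₁ := by
    by_contra! hneg
    have hx₁ρ : ‖x₁ - y‖ ≤ ρ := by simpa [dist_eq_norm] using hx₁
    have hlt : ‖x₁ - y‖ < ρ := by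
      refine lt_of_le_of_ne hx₁ρ fun h => ?_
      have : v x₁ = w x₁ := by simp only [hv, h, hκ]; ring
      linarith [hnn x₁ hx₁]
    have hgt : r < ‖x₁ - y‖ := by
      by_contra! h
      have h1 : w xm ≤ w x₁ := hm (by simpa [dist_eq_norm] using h)
      have h2 : Real.exp (-α * ‖x₁ - y‖ ^ 2 + 0) ≤ 1 := by
        rw [Real.exp_le_one_iff]; nlinarith [sq_nonneg ‖x₁ - y‖]
      have h3 : v x₁ = w x₁ - ε * (Real.exp (-α * ‖x₁ - y‖ ^ 2 + 0) - κ) := by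
        simp only [hv]; ring
      nlinarith
    have hball : x₁ ∈ ball y ρ := by simpa [dist_eq_norm] using hlt
    obtain ⟨l, hl, hl'⟩ := hlap x₁ hball
    have hlv := hl.add (((hasLap_exp_norm_sq (-α) 0 x₁ y).add
      (hasLap_const (-κ) x₁)).const_mul (-ε))
    have hloc : IsLocalMin v x₁ :=
      hmin.isLocalMin (mem_of_superset (isOpen_ball.mem_nhds hball) ball_subset_closedBall)
    have h0 := hlv.nonneg_of_isLocalMin hloc
    set X := Real.exp (-α * ‖x₁ - y‖ ^ 2 + 0) with hX
    have hX0 : 0 < X := Real.exp_pos _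
    have h1 : w x₁ < ε * X := by
      have : w x₁ + (-ε) * (X + -κ) < 0 := hneg
      nlinarith
    have h2 : L < 4 * α ^ 2 * ‖x₁ - y‖ ^ 2 - 2 * N * α := by
      have h3 : r ^ 2 ≤ ‖x₁ - y‖ ^ 2 := by gcongr
      have h4 : N + L + 1 ≤ α * ‖x₁ - y‖ ^ 2 := hαr.trans (by gcongr)
      have h5 : 4 * α * (N + L + 1) ≤ 4 * α * (α * ‖x₁ - y‖ ^ 2) := by gcongr
      nlinarith [mul_nonneg hN0 (by linarith : (0 : ℝ) ≤ α), mul_nonneg hL (by linarith : 0 ≤ α - 1)]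
    have h3 : L * w x₁ ≤ L * (ε * X) := by gcongr
    have h4 := mul_pos (mul_pos hε0 hX0) (sub_pos.2 h2)
    nlinarith
  intro x hx
  have hxv : v x₁ ≤ v x := hmin (ball_subset_closedBall hx)
  have hlt : ‖x - y‖ < ρ := by simpa [dist_eq_norm] using hx
  have hκx : κ < Real.exp (-α * ‖x - y‖ ^ 2 + 0) := by
    rw [hκ, Real.exp_lt_exp]
    have : ‖x - y‖ ^ 2 < ρ ^ 2 := by gcongr
    nlinarith
  have : 0 ≤ w x + (-ε) * (Real.exp (-α * ‖x - y‖ ^ 2 + 0) + -κ) := hv1.trans hxv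
  nlinarith

lemma strong_max_principle {w : EuclideanSpace ℝ (Fin N) → ℝ} {L : ℝ}
    {U : Set (EuclideanSpace ℝ (Fin N))} (hL : 0 ≤ L) (hU : IsOpen U) (hconn : IsPreconnected U)
    (hc : ContinuousOn w U) (hnn : ∀ x ∈ U, 0 ≤ w x)
    (hlap : ∀ x ∈ U, ∃ l, HasLap w x l ∧ l ≤ L * w x) :
    (∀ x ∈ U, w x = 0) ∨ ∀ x ∈ U, 0 < w x := by
  by_cases h : ∃ y ∈ U, w y ≠ 0
  swap
  · push Not at h
    exact Or.inl h
  right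
  obtain ⟨y₀, hy₀, hne⟩ := h
  have hPopen : IsOpen (U ∩ w ⁻¹' Ioi 0) := hc.isOpen_inter_preimage hU isOpen_Ioi
  have hsub : U ⊆ U ∩ w ⁻¹' Ioi 0 := by
    refine hconn.subset_of_closure_inter_subset hPopen
      ⟨y₀, hy₀, hy₀, lt_of_le_of_ne (hnn _ hy₀) hne.symm⟩ ?_
    rintro z ⟨hz, hzU⟩
    refine ⟨hzU, ?_⟩
    obtain ⟨η, hη, hηU⟩ := Metric.isOpen_iff.1 hU z hzU
    obtain ⟨y, hy, hzy⟩ := Metric.mem_closure_iff.1 hz (η / 3) (by positivity)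
    obtain ⟨r, hr, hrP⟩ := Metric.isOpen_iff.1 hPopen y hy
    have hball : closedBall y (η / 3) ⊆ U := fun x hx => hηU <| by
      have := dist_triangle x y z
      rw [mem_closedBall] at hx
      rw [dist_comm] at hzy
      rw [mem_ball]
      linarith
    refine pos_on_ball_of_pos_on_smaller (r := min (r / 2) (η / 6)) hL (by positivity)
      ((min_le_right _ _).trans_lt (by linarith)) (hc.mono hball) (fun x hx => hnn x (hball hx))
      (fun x hx => (hrP ?_).2) (fun x hx => hlap x (hball (ball_subset_closedBall hx))) z hzy
    rw [mem_closedBall] at hx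
    rw [mem_ball]
    have := min_le_left (r / 2) (η / 6)
    linarith
  exact fun x hx => (hsub hx).2

/-! ### A supersolution near the boundary of a half domain -/

set_option maxHeartbeats 800000 in
/-- A positive function `g` on the closed half annulus with `Δg + Lg < 0` in a layer of width `δ`
along its boundary, where `δ` does not depend on the direction `e`; it replaces the maximum
principle in domains of small measure. The function is a constant minus the exponentials
`exp(-M x·e)`, `exp(-M(R² - |x|²))` and `exp(-M(|x|² - a²))`, each bounded by `1` and subharmonic
on the half annulus, with Laplacian of order `M²` near its own piece of the boundary. For `a = 0`
the third one is dropped: points near the origin are close to the hyperplane `H(e)`. -/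
lemma exists_layer_barrier {a R L : ℝ} (ha : 0 ≤ a) (haR : a < R) (hL : 0 ≤ L) :
    ∃ δ > 0, ∀ e : EuclideanSpace ℝ (Fin N), ‖e‖ = 1 →
      ∃ g : EuclideanSpace ℝ (Fin N) → ℝ, Continuous g ∧
        (∀ x, a ≤ ‖x‖ → ‖x‖ ≤ R → 0 ≤ ⟪x, e⟫ → 0 < g x) ∧
        ∀ x, a < ‖x‖ → ‖x‖ < R → 0 < ⟪x, e⟫ →
          (⟪x, e⟫ < δ ∨ R - δ < ‖x‖ ∨ ‖x‖ < a + δ) →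
          ∃ l, HasLap g x l ∧ l + L * g x < 0 := by
  have hR : 0 < R := ha.trans_lt haR
  have hN0 : (0 : ℝ) ≤ N := Nat.cast_nonneg N
  obtain ⟨s, c, hs0, hs1, hc0, hc1, hcR, hsa⟩ : ∃ s c : ℝ, 0 ≤ s ∧ s ≤ 1 ∧ 0 < c ∧ c ≤ 1 ∧
      c ≤ R ^ 2 ∧ ((a = 0 ∧ s = 0) ∨ (0 < a ∧ s = 1 ∧ c ≤ a ^ 2)) := by
    rcases ha.eq_or_lt with h | h
    · exact ⟨0, min 1 (R ^ 2), le_rfl, zero_le_one, by positivity, min_le_left _ _,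
        min_le_right _ _, Or.inl ⟨h.symm, rfl⟩⟩
    · exact ⟨1, min 1 (a ^ 2), zero_le_one, le_rfl, by positivity, min_le_left _ _,
        (min_le_right _ _).trans (by gcongr), Or.inr ⟨h, rfl, min_le_right _ _⟩⟩
  -- the second summand makes `M² c / 3` exceed `6L`; the third makes the inner exponential
  -- subharmonic for `|x| > a` (for `a = 0` it is `N / 0 = 0`)
  set M : ℝ := 1 + (18 * L + 1) / c + N / a ^ 2 with hM
  have hMc1 : 0 ≤ (18 * L + 1) / c := by positivity
  have hMa1 : 0 ≤ N / a ^ 2 := by positivity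
  have hM1 : 1 ≤ M := by rw [hM]; linarith
  have hM0 : 0 < M := by linarith
  have hMc : 18 * L + 1 ≤ M * c := by
    have : (18 * L + 1) / c * c = 18 * L + 1 := div_mul_cancel₀ _ hc0.ne'
    rw [hM]; nlinarith [mul_nonneg hMa1 hc0.le]
  have hMMc : 18 * L < M ^ 2 * c := by nlinarith [mul_nonneg hM0.le hc0.le]
  have hMa : 0 < a → N ≤ M * a ^ 2 := fun h => by
    have : N / a ^ 2 * a ^ 2 = N := div_mul_cancel₀ _ (by positivity)
    rw [hM]; nlinarith [mul_nonneg hMc1 (sq_nonneg a), sq_nonneg a]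
  clear_value M
  refine ⟨min (1 / M) (min (1 / (2 * R * M)) (R / 2)), by positivity, fun e he => ?_⟩
  set δ := min (1 / M) (min (1 / (2 * R * M)) (R / 2)) with hδ
  have hδ1 : M * δ ≤ 1 := by
    have : δ ≤ 1 / M := min_le_left _ _
    rwa [le_div_iff₀ hM0, mul_comm] at this
  have hδ2 : M * (2 * R * δ) ≤ 1 := by
    have : δ ≤ 1 / (2 * R * M) := (min_le_right _ _).trans (min_le_left _ _)
    rw [le_div_iff₀ (by positivity)] at this
    linarith
  have hδ3 : δ ≤ R / 2 := (min_le_right _ _).trans (min_le_right _ _)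
  clear_value δ
  refine ⟨fun z => 6 + (-1) * Real.exp (-M * ⟪z, e⟫) +
      (-1) * Real.exp (M * ‖z - 0‖ ^ 2 + -(M * R ^ 2)) +
      (-s) * Real.exp (-M * ‖z - 0‖ ^ 2 + M * a ^ 2), by fun_prop, ?_, ?_⟩
  · intro x hax hxR hxe
    have h1 : Real.exp (-M * ⟪x, e⟫) ≤ 1 := by
      rw [Real.exp_le_one_iff]; nlinarith
    have h2 : Real.exp (M * ‖x - 0‖ ^ 2 + -(M * R ^ 2)) ≤ 1 := by
      rw [Real.exp_le_one_iff, sub_zero]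
      have : ‖x‖ ^ 2 ≤ R ^ 2 := by gcongr
      nlinarith
    have h3 : Real.exp (-M * ‖x - 0‖ ^ 2 + M * a ^ 2) ≤ 1 := by
      rw [Real.exp_le_one_iff, sub_zero]
      have : a ^ 2 ≤ ‖x‖ ^ 2 := by gcongr
      nlinarith
    have h4 := mul_le_mul hs1 h3 (Real.exp_pos _).le zero_le_one
    linarith
  · intro x hax hxR hxe hlayer
    refine ⟨_, (((hasLap_const 6 x).add ((hasLap_exp_inner (-M) he x).const_mul (-1))).add
      ((hasLap_exp_norm_sq M (-(M * R ^ 2)) x 0).const_mul (-1))).add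
      ((hasLap_exp_norm_sq (-M) (M * a ^ 2) x 0).const_mul (-s)), ?_⟩
    simp only [sub_zero]
    have key : ∀ t : ℝ, -1 ≤ t → 1 / 3 ≤ Real.exp t := fun t ht => by
      have h1 : Real.exp (-1) ≤ Real.exp t := Real.exp_le_exp.2 ht
      have h2 : (1 : ℝ) / 3 ≤ Real.exp (-1) := by
        rw [Real.exp_neg, ← one_div]
        have := Real.exp_one_lt_d9
        exact one_div_le_one_div_of_le (Real.exp_pos _) (by linarith)
      exact h2.trans h1
    have hn0 : 0 < ‖x‖ := ha.trans_lt hax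
    set n := ‖x‖ with hn
    have hE1 := Real.exp_pos (-M * ⟪x, e⟫)
    have hE2 := Real.exp_pos (M * n ^ 2 + -(M * R ^ 2))
    have hE3 := Real.exp_pos (-M * n ^ 2 + M * a ^ 2)
    have hk1 := key (-M * ⟪x, e⟫)
    have hk2 := key (M * n ^ 2 + -(M * R ^ 2))
    have hk3 := key (-M * n ^ 2 + M * a ^ 2)
    set E1 := Real.exp (-M * ⟪x, e⟫)
    set E2 := Real.exp (M * n ^ 2 + -(M * R ^ 2))
    set E3 := Real.exp (-M * n ^ 2 + M * a ^ 2)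
    clear_value E1 E2 E3 n
    clear hδ hM
    have hT1 : 0 ≤ M ^ 2 * E1 := by positivity
    have hT2 : 0 ≤ (4 * M ^ 2 * n ^ 2 + 2 * N * M) * E2 := by positivity
    have hP3 : 0 < a → 2 * M ^ 2 * a ^ 2 ≤ 4 * M ^ 2 * n ^ 2 - 2 * N * M := fun h => by
      have h1 : a ^ 2 ≤ n ^ 2 := by gcongr
      have h2 := mul_le_mul_of_nonneg_left (hMa h) hM0.le
      have h3 : M ^ 2 * a ^ 2 ≤ M ^ 2 * n ^ 2 := by gcongr
      nlinarith
    have hT3 : 0 ≤ s * ((4 * M ^ 2 * n ^ 2 - 2 * N * M) * E3) := by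
      rcases hsa with ⟨-, h⟩ | ⟨h, -, -⟩
      · simp [h]
      · refine mul_nonneg hs0 (mul_nonneg ((hP3 h).trans' (by positivity)) hE3.le)
    have hmain : 6 * L < M ^ 2 * E1 + (4 * M ^ 2 * n ^ 2 + 2 * N * M) * E2 +
        s * ((4 * M ^ 2 * n ^ 2 - 2 * N * M) * E3) := by
      have layer1 : ⟪x, e⟫ < δ → 6 * L < M ^ 2 * E1 := fun h => by
        have h1 : M * ⟪x, e⟫ ≤ M * δ := by gcongr
        have := hk1 (by linarith)
        have h2 : M ^ 2 * (1 / 3) ≤ M ^ 2 * E1 := by gcongr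
        have h3 : M ^ 2 * c ≤ M ^ 2 * 1 := by gcongr
        linarith
      rcases hlayer with h | h | h
      · linarith [layer1 h]
      · have h1 : R / 2 < n := by linarith
        have h2 : (R / 2) ^ 2 ≤ n ^ 2 := by gcongr
        have h3 := hk2 (by
          have : (R - n) * (R + n) ≤ δ * (2 * R) := by
            apply mul_le_mul <;> linarith
          have := mul_le_mul_of_nonneg_left this hM0.le
          linarith)
        have h4 : (4 * M ^ 2 * (R / 2) ^ 2) * (1 / 3) ≤ (4 * M ^ 2 * n ^ 2 + 2 * N * M) * E2 := by
          apply mul_le_mul _ h3 (by norm_num) (by positivity)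
          have : 4 * M ^ 2 * (R / 2) ^ 2 ≤ 4 * M ^ 2 * n ^ 2 := by gcongr
          have : 0 ≤ 2 * N * M := by positivity
          linarith
        have h5 : M ^ 2 * c ≤ M ^ 2 * R ^ 2 := by gcongr
        linarith
      · rcases hsa with ⟨h0, -⟩ | ⟨h0, hs, hca⟩
        · have : ⟪x, e⟫ ≤ n := by simpa [he, hn] using real_inner_le_norm x e
          linarith [layer1 (by linarith)]
        · have h3 := hk3 (by
            have : (n - a) * (n + a) ≤ δ * (2 * R) := by
              apply mul_le_mul <;> linarith
            have := mul_le_mul_of_nonneg_left this hM0.le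
            linarith)
          have h4 : (2 * M ^ 2 * a ^ 2) * (1 / 3) ≤ (4 * M ^ 2 * n ^ 2 - 2 * N * M) * E3 :=
            mul_le_mul (hP3 h0) h3 (by norm_num) ((hP3 h0).trans' (by positivity))
          have h5 : M ^ 2 * c ≤ M ^ 2 * a ^ 2 := by gcongr
          rw [hs]
          linarith
    have hg : L * (6 + (-1) * E1 + (-1) * E2 + (-s) * E3) ≤ L * 6 := by
      gcongr
      linarith [mul_nonneg hs0 hE3.le]
    linarith

/-! ### Reflection differences on half domains -/

/-- The data entering the rotating plane argument: `B` is a ball (`a = 0`) or an annulus of radii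
`a < R`, `u` is continuous on the closure and vanishes on the boundary, and every difference
`w = u - u ∘ σ_e` satisfies `|Δw| ≤ L|w|` in `B`. -/
structure RotSetup (B : Set (EuclideanSpace ℝ (Fin N))) (a R L : ℝ)
    (u : EuclideanSpace ℝ (Fin N) → ℝ) : Prop where
  a_nonneg : 0 ≤ a
  a_lt : a < R
  L_nonneg : 0 ≤ L
  isOpen : IsOpen B
  mem_of : ∀ x, a < ‖x‖ → ‖x‖ < R → x ∈ B
  of_mem : ∀ x ∈ B, x ≠ 0 → a < ‖x‖ ∧ ‖x‖ < R
  of_mem_closure : ∀ x ∈ closure B, a ≤ ‖x‖ ∧ ‖x‖ ≤ R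
  radial : ∀ x y, ‖x‖ = ‖y‖ → x ∈ B → y ∈ B
  cont : ContinuousOn u (closure B)
  zero : ∀ x ∈ closure B, x ∉ B → u x = 0
  lap : ∀ x ∈ B, ∀ e, ‖e‖ = 1 → ∃ l, HasLap (fun y => u y - u (reflHyp e y)) x l ∧
    |l| ≤ L * |u x - u (reflHyp e x)|

/-- `u ≥ u ∘ σ_e` on `B(e)`. -/
def DomNonneg (B : Set (EuclideanSpace ℝ (Fin N))) (u : EuclideanSpace ℝ (Fin N) → ℝ)
    (e : EuclideanSpace ℝ (Fin N)) : Prop := ∀ x ∈ halfDom B e, u (reflHyp e x) ≤ u x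

/-- `u > u ∘ σ_e` on `B(e)`. -/
def DomPos (B : Set (EuclideanSpace ℝ (Fin N))) (u : EuclideanSpace ℝ (Fin N) → ℝ)
    (e : EuclideanSpace ℝ (Fin N)) : Prop := ∀ x ∈ halfDom B e, u (reflHyp e x) < u x

namespace RotSetup

variable {B : Set (EuclideanSpace ℝ (Fin N))} {a R L : ℝ} {u : EuclideanSpace ℝ (Fin N) → ℝ}

lemma isOpen_halfDom (S : RotSetup B a R L u) (e : EuclideanSpace ℝ (Fin N)) :
    IsOpen (halfDom B e) :=
  S.isOpen.inter (isOpen_lt (f := fun _ => (0 : ℝ)) (g := fun x => ⟪x, e⟫) continuous_const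
    (by fun_prop))

lemma of_mem_halfDom (S : RotSetup B a R L u) {e x : EuclideanSpace ℝ (Fin N)}
    (hx : x ∈ halfDom B e) : a < ‖x‖ ∧ ‖x‖ < R :=
  S.of_mem x hx.1 fun h => by simpa [h] using hx.2

/-- A half domain is the image of the product of an interval of radii and a half space under
`(t, x) ↦ t x / |x|`. -/
lemma isPreconnected_halfDom (S : RotSetup B a R L u) (e : EuclideanSpace ℝ (Fin N)) :
    IsPreconnected (halfDom B e) := by
  have himg : halfDom B e = (fun q : ℝ × EuclideanSpace ℝ (Fin N) => (q.1 / ‖q.2‖) • q.2) ''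
      (Ioo a R ×ˢ {x | 0 < ⟪x, e⟫}) := by
    ext x
    constructor
    · intro hx
      have h := S.of_mem_halfDom hx
      refine ⟨(‖x‖, x), ⟨h, hx.2⟩, ?_⟩
      have : ‖x‖ ≠ 0 := (S.a_nonneg.trans_lt h.1).ne'
      simp [this]
    · rintro ⟨⟨t, y⟩, ⟨ht, hy⟩, rfl⟩
      have hy' : 0 < ⟪y, e⟫ := hy
      have hy0 : 0 < ‖y‖ := norm_pos_iff.2 fun h => by simp [h] at hy'
      have ht0 : 0 < t := S.a_nonneg.trans_lt ht.1
      have hn : ‖(t / ‖y‖) • y‖ = t := by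
        rw [norm_smul, Real.norm_of_nonneg (by positivity), div_mul_cancel₀ _ hy0.ne']
      refine ⟨S.mem_of _ (by rw [hn]; exact ht.1) (by rw [hn]; exact ht.2), ?_⟩
      simp only [real_inner_smul_left]
      positivity
  rw [himg]
  refine IsPreconnected.image ?_ _ ?_
  · refine isPreconnected_Ioo.prod (Convex.isPreconnected ?_)
    intro x hx y hy s t hs ht hst
    simp only [mem_ofPred_eq, inner_add_left, real_inner_smul_left] at *
    rcases hs.eq_or_lt with h | h
    · have : t = 1 := by linarith
      simpa [← h, this] using hy
    · nlinarith [mul_pos h hx, mul_nonneg ht hy.le]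
  · refine ContinuousOn.smul (continuousOn_fst.div (by fun_prop) ?_) continuousOn_snd
    rintro ⟨t, y⟩ ⟨-, hy⟩ h0
    have hy' : 0 < ⟪y, e⟫ := hy
    have : y = 0 := norm_eq_zero.1 h0
    simp [this] at hy'

lemma reflHyp_mem (S : RotSetup B a R L u) {e : EuclideanSpace ℝ (Fin N)} (he : ‖e‖ = 1)
    {x : EuclideanSpace ℝ (Fin N)} (hx : x ∈ B) : reflHyp e x ∈ B :=
  S.radial x _ (reflHyp_norm he x).symm hx

lemma reflHyp_mem_closure (S : RotSetup B a R L u) {e : EuclideanSpace ℝ (Fin N)}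
    (he : ‖e‖ = 1) {x : EuclideanSpace ℝ (Fin N)} (hx : x ∈ closure B) :
    reflHyp e x ∈ closure B := by
  have hcont : Continuous (reflHyp e) :=
    continuous_reflHyp.comp (Continuous.prodMk continuous_const continuous_id)
  exact MapsTo.closure (fun y hy => S.reflHyp_mem he hy) hcont hx

lemma continuousOn_diff (S : RotSetup B a R L u) {e : EuclideanSpace ℝ (Fin N)} (he : ‖e‖ = 1) :
    ContinuousOn (fun x => u x - u (reflHyp e x)) (closure B) := by
  have hcont : Continuous (reflHyp e) :=
    continuous_reflHyp.comp (Continuous.prodMk continuous_const continuous_id)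
  exact S.cont.sub (S.cont.comp hcont.continuousOn fun x hx => S.reflHyp_mem_closure he hx)

/-- Limits of `u(σ_{e}x)` as both direction and point vary, at interior points. -/
lemma tendsto_reflHyp (S : RotSetup B a R L u) {ι : Type*} {F : Filter ι}
    {e : ι → EuclideanSpace ℝ (Fin N)} {x : ι → EuclideanSpace ℝ (Fin N)}
    {e₀ x₀ : EuclideanSpace ℝ (Fin N)} (he₀ : ‖e₀‖ = 1) (hx₀ : x₀ ∈ B)
    (he : Tendsto e F (nhds e₀)) (hx : Tendsto x F (nhds x₀)) :
    Tendsto (fun i => u (reflHyp (e i) (x i))) F (nhds (u (reflHyp e₀ x₀))) := by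
  have h1 : ContinuousAt u (reflHyp e₀ x₀) := S.cont.continuousAt
    (mem_of_superset (S.isOpen.mem_nhds (S.reflHyp_mem he₀ hx₀)) subset_closure)
  exact h1.tendsto.comp ((continuous_reflHyp.tendsto (e₀, x₀)).comp (he.prodMk_nhds hx))

lemma continuousAt (S : RotSetup B a R L u) {x : EuclideanSpace ℝ (Fin N)} (hx : x ∈ B) :
    ContinuousAt u x :=
  S.cont.continuousAt (mem_of_superset (S.isOpen.mem_nhds hx) subset_closure)

lemma pos_or_eq (S : RotSetup B a R L u) {e : EuclideanSpace ℝ (Fin N)} (he : ‖e‖ = 1)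
    (hnn : DomNonneg B u e) : DomPos B u e ∨ ∀ x ∈ B, u (reflHyp e x) = u x := by
  rcases strong_max_principle (w := fun x => u x - u (reflHyp e x)) S.L_nonneg
    (S.isOpen_halfDom e) (S.isPreconnected_halfDom e)
    ((S.continuousOn_diff he).mono fun x hx => subset_closure hx.1)
    (fun x hx => sub_nonneg.2 (hnn x hx)) (fun x hx => by
      obtain ⟨l, hl, hl'⟩ := S.lap x hx.1 e he
      refine ⟨l, hl, (le_abs_self l).trans (hl'.trans_eq ?_)⟩
      rw [abs_of_nonneg (sub_nonneg.2 (hnn x hx))]) with h | h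
  · right
    intro x hx
    rcases lt_trichotomy 0 ⟪x, e⟫ with h0 | h0 | h0
    · have := h x ⟨hx, h0⟩
      linarith
    · rw [reflHyp_of_inner_eq_zero h0.symm]
    · have := h (reflHyp e x) ⟨S.reflHyp_mem he hx, by rw [reflHyp_inner he]; linarith⟩
      rw [reflHyp_invol he] at this
      linarith
  · exact Or.inl fun x hx => sub_pos.1 (h x hx)

lemma smul_mem_halfDom (S : RotSetup B a R L u) {e : EuclideanSpace ℝ (Fin N)} (he : ‖e‖ = 1) :
    ((a + R) / 2) • e ∈ halfDom B e := by
  have ha := S.a_nonneg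
  have haR := S.a_lt
  have hn : ‖((a + R) / 2) • e‖ = (a + R) / 2 := by
    rw [norm_smul, he, Real.norm_of_nonneg (by linarith), mul_one]
  refine ⟨S.mem_of _ (by rw [hn]; linarith) (by rw [hn]; linarith), ?_⟩
  rw [real_inner_smul_left, real_inner_self_eq_norm_sq, he]
  linarith

/-- If `u > u ∘ σ_e` fails on `B(e)`, then it fails at a point at distance at least `δ` from
`∂B(e)`, with `δ` independent of `e`: a negative minimum of `(u - u ∘ σ_e) / g`, for the barrier
`g`, cannot lie in the boundary layer. -/
lemma exists_core_point (S : RotSetup B a R L u) :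
    ∃ δ > 0, ∀ e : EuclideanSpace ℝ (Fin N), ‖e‖ = 1 → ¬ DomPos B u e →
      ∃ x, δ ≤ ⟪x, e⟫ ∧ a + δ ≤ ‖x‖ ∧ ‖x‖ ≤ R - δ ∧ u x ≤ u (reflHyp e x) := by
  have ha := S.a_nonneg
  have haR := S.a_lt
  obtain ⟨δ, hδ, hbar⟩ := exists_layer_barrier (N := N) ha haR S.L_nonneg
  refine ⟨min δ ((R - a) / 2), lt_min hδ (by linarith), fun e he hnp => ?_⟩
  have hm1 := min_le_left δ ((R - a) / 2)
  have hm2 := min_le_right δ ((R - a) / 2)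
  by_cases hnn : DomNonneg B u e
  · have heq := (S.pos_or_eq he hnn).resolve_left hnp
    have hmem := S.smul_mem_halfDom he
    have hn : ‖((a + R) / 2) • e‖ = (a + R) / 2 := by
      rw [norm_smul, he, Real.norm_of_nonneg (by linarith), mul_one]
    refine ⟨_, ?_, ?_, ?_, (heq _ hmem.1).ge⟩
    · rw [real_inner_smul_left, real_inner_self_eq_norm_sq, he]
      linarith
    · rw [hn]; linarith
    · rw [hn]; linarith
  · simp only [DomNonneg, not_forall, not_le] at hnn
    obtain ⟨x₂, hx₂, hneg₂⟩ := hnn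
    obtain ⟨g, hgc, hgpos, hglap⟩ := hbar e he
    set w : EuclideanSpace ℝ (Fin N) → ℝ := fun x => u x - u (reflHyp e x) with hw
    have hcomp : IsCompact (closure B ∩ {x | 0 ≤ ⟪x, e⟫}) := by
      refine Metric.isCompact_of_isClosed_isBounded
        (isClosed_closure.inter (isClosed_le continuous_const (by fun_prop))) ?_
      refine isBounded_iff_forall_norm_le.2 ⟨R, fun x hx => (S.of_mem_closure x hx.1).2⟩
    have hgD : ∀ x ∈ closure B ∩ {x | 0 ≤ ⟪x, e⟫}, 0 < g x := fun x hx =>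
      hgpos x (S.of_mem_closure x hx.1).1 (S.of_mem_closure x hx.1).2 hx.2
    have hquot : ContinuousOn (fun x => w x / g x) (closure B ∩ {x | 0 ≤ ⟪x, e⟫}) :=
      ((S.continuousOn_diff he).mono inter_subset_left).div hgc.continuousOn
        fun x hx => (hgD x hx).ne'
    have hx₂D : x₂ ∈ closure B ∩ {x | 0 ≤ ⟪x, e⟫} := ⟨subset_closure hx₂.1, hx₂.2.le⟩
    obtain ⟨x₁, hx₁, hmin⟩ := hcomp.exists_isMinOn ⟨x₂, hx₂D⟩ hquot
    set m : ℝ := w x₁ / g x₁ with hm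
    have hm0 : m < 0 := by
      have h1 : m ≤ w x₂ / g x₂ := hmin hx₂D
      exact h1.trans_lt (div_neg_of_neg_of_pos (sub_neg.2 hneg₂) (hgD x₂ hx₂D))
    have hwm : w x₁ = m * g x₁ := by rw [hm, div_mul_cancel₀ _ (hgD x₁ hx₁).ne']
    have hw1 : w x₁ < 0 := by rw [hwm]; exact mul_neg_of_neg_of_pos hm0 (hgD x₁ hx₁)
    have hx₁B : x₁ ∈ B := by
      by_contra hnB
      have h1 := S.zero x₁ hx₁.1 hnB
      have h2 := S.zero (reflHyp e x₁) (S.reflHyp_mem_closure he hx₁.1)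
        fun h => hnB (S.radial _ _ (reflHyp_norm he x₁) h)
      simp [hw, h1, h2] at hw1
    have hx₁e : 0 < ⟪x₁, e⟫ := by
      refine lt_of_le_of_ne hx₁.2 fun h => ?_
      simp [hw, reflHyp_of_inner_eq_zero h.symm] at hw1
    have hx₁H : x₁ ∈ halfDom B e := ⟨hx₁B, hx₁e⟩
    have hno : ¬ (⟪x₁, e⟫ < δ ∨ R - δ < ‖x₁‖ ∨ ‖x₁‖ < a + δ) := by
      intro hlayer
      obtain ⟨lg, hlg, hlg'⟩ := hglap x₁ (S.of_mem_halfDom hx₁H).1 (S.of_mem_halfDom hx₁H).2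
        hx₁e hlayer
      obtain ⟨l, hl, hl'⟩ := S.lap x₁ hx₁B e he
      have hloc : IsLocalMin (fun y => (u y - u (reflHyp e y)) + (-m) * g y) x₁ := by
        filter_upwards [(S.isOpen_halfDom e).mem_nhds hx₁H] with y hy
        have hyD : y ∈ closure B ∩ {x | 0 ≤ ⟪x, e⟫} := ⟨subset_closure hy.1, hy.2.le⟩
        have h1 : m ≤ w y / g y := hmin hyD
        rw [le_div_iff₀ (hgD y hyD)] at h1
        have h2 : w x₁ + (-m) * g x₁ ≤ w y + (-m) * g y := by rw [hwm]; linarith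
        exact h2
      have h0 := (hl.add (hlg.const_mul (-m))).nonneg_of_isLocalMin hloc
      have h1 : l ≤ L * (-w x₁) := by
        rw [← abs_of_neg hw1]
        exact (le_abs_self l).trans hl'
      rw [hwm] at h1
      nlinarith
    push Not at hno
    obtain ⟨h1, h2, h3⟩ := hno
    exact ⟨x₁, hm1.trans h1, by linarith, by linarith, (sub_neg.1 hw1).le⟩

/-- Strict domination is an open condition on the direction. -/
lemma eventually_domPos (S : RotSetup B a R L u) {e₀ : EuclideanSpace ℝ (Fin N)}
    (he₀ : ‖e₀‖ = 1) (hpos : DomPos B u e₀) :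
    ∃ ε > 0, ∀ e : EuclideanSpace ℝ (Fin N), ‖e‖ = 1 → dist e e₀ < ε → DomPos B u e := by
  by_contra! hcon
  obtain ⟨δ, hδ, hcore⟩ := S.exists_core_point
  choose e he hde hnp using fun n : ℕ => hcon (1 / ((n : ℝ) + 1)) (by positivity)
  choose x hxe hxa hxR hxu using fun n => hcore (e n) (he n) (hnp n)
  have hetend : Tendsto e atTop (nhds e₀) := by
    rw [tendsto_iff_dist_tendsto_zero]
    exact squeeze_zero (fun _ => dist_nonneg) (fun n => (hde n).le)
      tendsto_one_div_add_atTop_nhds_zero_nat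
  obtain ⟨x₀, -, φ, hφ, hx₀⟩ := (isCompact_closedBall (0 : EuclideanSpace ℝ (Fin N))
    (R - δ)).tendsto_subseq (x := x) (fun n => by simpa using hxR n)
  have hephi : Tendsto (fun n => e (φ n)) atTop (nhds e₀) := hetend.comp hφ.tendsto_atTop
  have hn0 : Tendsto (fun n => ‖x (φ n)‖) atTop (nhds ‖x₀‖) := hx₀.norm
  have h1 : a + δ ≤ ‖x₀‖ := ge_of_tendsto' hn0 fun n => hxa (φ n)
  have h2 : ‖x₀‖ ≤ R - δ := le_of_tendsto' hn0 fun n => hxR (φ n)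
  have h3 : δ ≤ ⟪x₀, e₀⟫ :=
    ge_of_tendsto' (Filter.Tendsto.inner (𝕜 := ℝ) hx₀ hephi) fun n => hxe (φ n)
  have hx₀B : x₀ ∈ B := S.mem_of x₀ (by linarith) (by linarith)
  have h4 : u x₀ ≤ u (reflHyp e₀ x₀) :=
    le_of_tendsto_of_tendsto' ((S.continuousAt hx₀B).tendsto.comp hx₀)
      (S.tendsto_reflHyp he₀ hx₀B hephi hx₀) fun n => hxu (φ n)
  exact absurd (hpos x₀ ⟨hx₀B, by linarith⟩) (not_lt.2 h4)

/-- Weak domination passes to limits of directions. -/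
lemma domNonneg_of_tendsto (S : RotSetup B a R L u) {ι : Type*} {F : Filter ι} [F.NeBot]
    {e : ι → EuclideanSpace ℝ (Fin N)} {e₀ : EuclideanSpace ℝ (Fin N)} (he₀ : ‖e₀‖ = 1)
    (he : Tendsto e F (nhds e₀)) (h : ∀ᶠ i in F, DomNonneg B u (e i)) : DomNonneg B u e₀ := by
  intro x hx
  refine le_of_tendsto (S.tendsto_reflHyp he₀ hx.1 he tendsto_const_nhds) ?_
  have hin : Tendsto (fun i => ⟪x, e i⟫) F (nhds ⟪x, e₀⟫) :=
    Filter.Tendsto.inner (𝕜 := ℝ) tendsto_const_nhds he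
  filter_upwards [h, hin.eventually (lt_mem_nhds hx.2)] with i h1 h2 using h1 x ⟨hx.1, h2⟩

end RotSetup

/-! ### Rotating the hyperplane -/

/-- The great circle through the orthonormal pair `e₀`, `e₁`. -/
def greatCircle (e₀ e₁ : EuclideanSpace ℝ (Fin N)) (t : ℝ) : EuclideanSpace ℝ (Fin N) :=
  Real.cos t • e₀ + Real.sin t • e₁

section GreatCircle

variable {e₀ e₁ : EuclideanSpace ℝ (Fin N)}

lemma continuous_greatCircle : Continuous (greatCircle e₀ e₁) := by
  unfold greatCircle
  fun_prop

lemma inner_greatCircle (h₀ : ‖e₀‖ = 1) (h₁ : ‖e₁‖ = 1) (h : ⟪e₀, e₁⟫ = 0) (s t : ℝ) :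
    ⟪greatCircle e₀ e₁ s, greatCircle e₀ e₁ t⟫ = Real.cos (s - t) := by
  have h' : ⟪e₁, e₀⟫ = 0 := by rw [real_inner_comm, h]
  simp only [greatCircle, inner_add_left, inner_add_right, real_inner_smul_left,
    real_inner_smul_right, real_inner_self_eq_norm_sq, h, h', h₀, h₁, Real.cos_sub]
  ring

lemma norm_greatCircle (h₀ : ‖e₀‖ = 1) (h₁ : ‖e₁‖ = 1) (h : ⟪e₀, e₁⟫ = 0) (t : ℝ) :
    ‖greatCircle e₀ e₁ t‖ = 1 := by
  have := inner_greatCircle h₀ h₁ h t t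
  rw [real_inner_self_eq_norm_sq, sub_self, Real.cos_zero] at this
  exact (pow_eq_one_iff_of_nonneg (norm_nonneg _) two_ne_zero).1 this

lemma reflHyp_greatCircle (h₀ : ‖e₀‖ = 1) (h₁ : ‖e₁‖ = 1) (h : ⟪e₀, e₁⟫ = 0) (ρ s t : ℝ) :
    reflHyp (greatCircle e₀ e₁ s) (ρ • greatCircle e₀ e₁ t) =
      ρ • greatCircle e₀ e₁ (2 * s + Real.pi - t) := by
  rw [reflHyp, real_inner_smul_left, inner_greatCircle h₀ h₁ h]
  have hc : Real.cos (2 * s + Real.pi - t) = Real.cos t - 2 * Real.cos (t - s) * Real.cos s := by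
    rw [show 2 * s + Real.pi - t = (s - (t - s)) + Real.pi by ring, Real.cos_add_pi, Real.cos_sub]
    conv_rhs => rw [show Real.cos t = Real.cos (s + (t - s)) by ring_nf, Real.cos_add]
    ring
  have hs : Real.sin (2 * s + Real.pi - t) = Real.sin t - 2 * Real.cos (t - s) * Real.sin s := by
    rw [show 2 * s + Real.pi - t = (s - (t - s)) + Real.pi by ring, Real.sin_add_pi, Real.sin_sub]
    conv_rhs => rw [show Real.sin t = Real.sin (s + (t - s)) by ring_nf, Real.sin_add]
    ring
  rw [greatCircle, greatCircle, greatCircle, hc, hs]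
  module

lemma greatCircle_sub_pi (t : ℝ) :
    greatCircle e₀ e₁ (t - Real.pi) = -greatCircle e₀ e₁ t := by
  simp only [greatCircle, Real.cos_sub_pi, Real.sin_sub_pi]
  module

lemma greatCircle_neg (t : ℝ) : greatCircle e₀ e₁ (-t) = greatCircle e₀ (-e₁) t := by
  simp [greatCircle]

end GreatCircle

namespace RotSetup

variable {B : Set (EuclideanSpace ℝ (Fin N))} {a R L : ℝ} {u : EuclideanSpace ℝ (Fin N) → ℝ}

lemma not_domPos_neg (S : RotSetup B a R L u) {e : EuclideanSpace ℝ (Fin N)} (he : ‖e‖ = 1)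
    (hpos : DomPos B u e) : ¬ DomPos B u (-e) := by
  intro hneg
  have hx := S.smul_mem_halfDom he
  have h1 := hpos _ hx
  have h2 := hneg (reflHyp e (((a + R) / 2) • e)) ⟨S.reflHyp_mem he hx.1, by
    rw [inner_neg_right, reflHyp_inner he]
    linarith [hx.2]⟩
  rw [reflHyp_neg, reflHyp_invol he] at h2
  exact lt_asymm h1 h2

/-- Rotating `e₀` towards `e₁`, strict domination persists up to a first angle `β`, at which `u` is
symmetric. -/
lemma exists_endpoint (S : RotSetup B a R L u) {e₀ e₁ : EuclideanSpace ℝ (Fin N)}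
    (h₀ : ‖e₀‖ = 1) (h₁ : ‖e₁‖ = 1) (h : ⟪e₀, e₁⟫ = 0) (hpos : DomPos B u e₀) :
    ∃ β > 0, (∀ t, 0 ≤ t → t < β → DomPos B u (greatCircle e₀ e₁ t)) ∧
      DomNonneg B u (greatCircle e₀ e₁ β) ∧
      ∀ x ∈ B, u (reflHyp (greatCircle e₀ e₁ β) x) = u x := by
  have hγ0 : greatCircle e₀ e₁ 0 = e₀ := by simp [greatCircle]
  have hopen : IsOpen {t | DomPos B u (greatCircle e₀ e₁ t)} := by
    rw [isOpen_iff_mem_nhds]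
    intro t ht
    obtain ⟨ε, hε, hball⟩ := S.eventually_domPos (norm_greatCircle h₀ h₁ h t) ht
    filter_upwards [continuous_greatCircle.continuousAt (x := t) |>.preimage_mem_nhds
      (ball_mem_nhds _ hε)] with s hs
    exact hball _ (norm_greatCircle h₀ h₁ h s) hs
  set T : Set ℝ := Ici 0 ∩ {t | DomPos B u (greatCircle e₀ e₁ t)}ᶜ with hT
  have hTc : IsClosed T := isClosed_Ici.inter hopen.isClosed_compl
  have hTne : T.Nonempty := by
    refine ⟨Real.pi, Real.pi_pos.le, ?_⟩
    have : greatCircle e₀ e₁ Real.pi = -e₀ := by simp [greatCircle]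
    simpa [this] using S.not_domPos_neg h₀ hpos
  have hTb : BddBelow T := ⟨0, fun t ht => ht.1⟩
  have hβT : sInf T ∈ T := hTc.csInf_mem hTne hTb
  have hlt : ∀ t, 0 ≤ t → t < sInf T → DomPos B u (greatCircle e₀ e₁ t) := fun t ht htl => by
    by_contra hnp
    exact notMem_of_lt_csInf htl hTb ⟨ht, hnp⟩
  have hβ0 : 0 < sInf T := by
    refine lt_of_le_of_ne hβT.1 fun h0 => hβT.2 ?_
    rw [← h0]
    simpa [hγ0] using hpos
  have hnn : DomNonneg B u (greatCircle e₀ e₁ (sInf T)) := by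
    refine S.domNonneg_of_tendsto (F := nhdsWithin (sInf T) (Iio (sInf T)))
      (norm_greatCircle h₀ h₁ h _)
      (continuous_greatCircle.continuousAt.tendsto.mono_left nhdsWithin_le_nhds) ?_
    filter_upwards [Ioo_mem_nhdsLT hβ0] with t ht x hx
    exact (hlt t ht.1.le ht.2 x hx).le
  exact ⟨sInf T, hβ0, hlt, hnn, (S.pos_or_eq (norm_greatCircle h₀ h₁ h _) hnn).resolve_left hβT.2⟩

/-- Every reflection is comparable: the arc of strict domination around `e₀` in any great circle
has length at least `π`. Otherwise composing the two symmetries at its endpoints would contradict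
the strict inequality for its midpoint. -/
lemma domNonneg_or_neg (S : RotSetup B a R L u) {e₀ e : EuclideanSpace ℝ (Fin N)}
    (h₀ : ‖e₀‖ = 1) (hpos : DomPos B u e₀) (he : ‖e‖ = 1) :
    DomNonneg B u e ∨ DomNonneg B u (-e) := by
  have ha := S.a_nonneg
  have haR := S.a_lt
  set c : ℝ := ⟪e, e₀⟫ with hc
  set v := e - c • e₀ with hv
  have hev : e = c • e₀ + v := by rw [hv]; module
  have hv0 : ⟪e₀, v⟫ = 0 := by
    rw [hv, inner_sub_right, real_inner_smul_right, real_inner_self_eq_norm_sq, h₀, hc,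
      real_inner_comm]
    ring
  have hsq : c ^ 2 + ‖v‖ ^ 2 = 1 := by
    have h1 : ‖c • e₀ + v‖ ^ 2 = c ^ 2 + ‖v‖ ^ 2 := by
      rw [norm_add_sq_real, real_inner_smul_left, hv0, norm_smul, h₀, mul_one, Real.norm_eq_abs,
        sq_abs]
      ring
    rw [← h1, ← hev, he, one_pow]
  by_cases hvz : v = 0
  · rw [hvz, norm_zero] at hsq
    rw [hvz, add_zero] at hev
    rcases sq_eq_one_iff.1 (by linarith : c ^ 2 = 1) with hc1 | hc1
    · left
      rw [hev, hc1, one_smul]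
      exact fun x hx => (hpos x hx).le
    · right
      rw [hev, hc1, neg_one_smul, neg_neg]
      exact fun x hx => (hpos x hx).le
  have hvn : 0 < ‖v‖ := norm_pos_iff.2 hvz
  set e₁ := ‖v‖⁻¹ • v with he₁
  have h₁ : ‖e₁‖ = 1 := by
    rw [he₁, norm_smul, norm_inv, norm_norm, inv_mul_cancel₀ hvn.ne']
  have h : ⟪e₀, e₁⟫ = 0 := by rw [he₁, real_inner_smul_right, hv0, mul_zero]
  have hve : v = ‖v‖ • e₁ := by rw [he₁, smul_inv_smul₀ hvn.ne']
  have hθ : e = greatCircle e₀ e₁ (Real.arccos c) := by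
    rw [greatCircle, Real.cos_arccos (by nlinarith) (by nlinarith), Real.sin_arccos,
      show 1 - c ^ 2 = ‖v‖ ^ 2 by linarith, Real.sqrt_sq hvn.le, ← hve, ← hev]
  obtain ⟨β, hβ, hβpos, hβnn, hβeq⟩ := S.exists_endpoint h₀ h₁ h hpos
  obtain ⟨α, hα, hαpos, hαnn, hαeq⟩ := S.exists_endpoint (e₁ := -e₁) h₀ (by rwa [norm_neg])
    (by rw [inner_neg_right, h, neg_zero]) hpos
  rw [← greatCircle_neg] at hαnn
  simp only [← greatCircle_neg] at hαpos hαeq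
  have harc : ∀ t, -α < t → t < β → DomPos B u (greatCircle e₀ e₁ t) := fun t h1 h2 => by
    rcases le_total 0 t with ht | ht
    · exact hβpos t ht h2
    · simpa using hαpos (-t) (by linarith) (by linarith)
  have hlen : Real.pi ≤ β + α := by
    by_contra! hlen
    set ℓ := β + α with hℓ
    set m := (β - α) / 2 with hm
    set ρ := (a + R) / 2 with hρ
    have hmem : ∀ t, ρ • greatCircle e₀ e₁ t ∈ B := fun t =>
      (S.smul_mem_halfDom (norm_greatCircle h₀ h₁ h t)).1
    have hstrict := harc m (by rw [hm]; linarith) (by rw [hm]; linarith)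
      (ρ • greatCircle e₀ e₁ (m + Real.pi / 2 - ℓ)) ⟨hmem _, by
        rw [real_inner_smul_left, inner_greatCircle h₀ h₁ h,
          show m + Real.pi / 2 - ℓ - m = Real.pi / 2 - ℓ by ring, Real.cos_pi_div_two_sub]
        exact mul_pos (by rw [hρ]; linarith) (Real.sin_pos_of_pos_of_lt_pi (by linarith) hlen)⟩
    rw [reflHyp_greatCircle h₀ h₁ h] at hstrict
    have e1 := hαeq _ (hmem (m + Real.pi / 2 - ℓ))
    have e2 := hβeq _ (hmem (2 * m + Real.pi - (m + Real.pi / 2 - ℓ)))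
    rw [reflHyp_greatCircle h₀ h₁ h] at e1 e2
    -- both symmetries lead to the same point, because `ℓ` is the distance of their angles
    have hang : 2 * β + Real.pi - (2 * m + Real.pi - (m + Real.pi / 2 - ℓ)) =
        2 * -α + Real.pi - (m + Real.pi / 2 - ℓ) := by rw [hℓ, hm]; ring
    rw [hang, e1] at e2
    exact hstrict.ne e2.symm
  have hθ0 := Real.arccos_nonneg c
  have hθπ := Real.arccos_le_pi c
  rcases le_or_gt (Real.arccos c) β with h1 | h1
  · left
    rw [hθ]
    rcases h1.eq_or_lt with h2 | h2
    · rw [h2]; exact hβnn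
    · exact fun x hx => (harc _ (by linarith) h2 x hx).le
  · right
    rw [hθ, ← greatCircle_sub_pi]
    exact fun x hx => (harc _ (by linarith) (by linarith) x hx).le

/-- One strictly dominating direction forces foliated Schwarz symmetry: a reflection with
`p·e > 0` must be the dominating one of its pair because `u` is maximal at a multiple of `p` on a
sphere, and `p·e = 0` follows by approximation. -/
theorem foliated (S : RotSetup B a R L u) {e₀ : EuclideanSpace ℝ (Fin N)} (h₀ : ‖e₀‖ = 1)
    (hpos : DomPos B u e₀) : ∃ p : EuclideanSpace ℝ (Fin N), ‖p‖ = 1 ∧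
      FoliatedSchwarzOn (closure B) u p := by
  have ha := S.a_nonneg
  have haR := S.a_lt
  set ρ := (a + R) / 2 with hρ
  have hρ0 : 0 < ρ := by linarith
  have hsph : ∀ x ∈ sphere (0 : EuclideanSpace ℝ (Fin N)) ρ, x ∈ B := fun x hx => by
    have : ‖x‖ = ρ := by simpa using hx
    exact S.mem_of x (by linarith) (by linarith)
  -- the axis points to a maximum of `u` on a fixed sphere inside `B`
  obtain ⟨x₀, hx₀, hmax⟩ := (isCompact_sphere (0 : EuclideanSpace ℝ (Fin N)) ρ).exists_isMaxOn
    ⟨ρ • e₀, by simp [norm_smul, h₀, abs_of_pos hρ0]⟩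
    (S.cont.mono fun x hx => subset_closure (hsph x hx))
  have hx₀n : ‖x₀‖ = ρ := by simpa using hx₀
  set p := ρ⁻¹ • x₀ with hp
  have hpn : ‖p‖ = 1 := by
    rw [hp, norm_smul, norm_inv, Real.norm_of_nonneg hρ0.le, hx₀n, inv_mul_cancel₀ hρ0.ne']
  have hxp : x₀ = ρ • p := by rw [hp, smul_inv_smul₀ hρ0.ne']
  have hdom : ∀ e : EuclideanSpace ℝ (Fin N), ‖e‖ = 1 → 0 < ⟪p, e⟫ → DomNonneg B u e := by
    intro e he hpe
    refine (S.domNonneg_or_neg h₀ hpos he).elim id fun hneg => ?_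
    rcases S.pos_or_eq (by rwa [norm_neg]) hneg with h | h
    · exfalso
      have h1 := h (reflHyp e x₀) ⟨S.reflHyp_mem he (hsph x₀ hx₀), by
        rw [inner_neg_right, reflHyp_inner he, neg_neg, hxp, real_inner_smul_left]
        positivity⟩
      rw [reflHyp_neg, reflHyp_invol he] at h1
      have h2 : u (reflHyp e x₀) ≤ u x₀ := hmax (by simp [reflHyp_norm he, hx₀n])
      linarith
    · intro x hx
      have := h x hx.1
      rw [reflHyp_neg] at this
      exact this.le
  have hdom' : ∀ e : EuclideanSpace ℝ (Fin N), ‖e‖ = 1 → 0 ≤ ⟪p, e⟫ → DomNonneg B u e := by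
    intro e he hpe
    have hne : ∀ t : ℝ, 0 < t → 0 < ⟪p, e + t • p⟫ := fun t ht => by
      rw [inner_add_right, real_inner_smul_right, real_inner_self_eq_norm_sq, hpn]
      linarith
    refine S.domNonneg_of_tendsto (F := nhdsWithin (0 : ℝ) (Ioi 0))
      (e := fun t => ‖e + t • p‖⁻¹ • (e + t • p)) he ?_ ?_
    · have hc : ContinuousAt (fun t : ℝ => ‖e + t • p‖⁻¹ • (e + t • p)) 0 := by
        have h1 : ContinuousAt (fun t : ℝ => e + t • p) 0 := by fun_prop
        exact (h1.norm.inv₀ (by simp [he])).smul h1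
      have := hc.tendsto.mono_left (nhdsWithin_le_nhds (s := Ioi 0))
      simpa [he] using this
    · filter_upwards [self_mem_nhdsWithin] with t ht
      have ht' := hne t ht
      have hn : 0 < ‖e + t • p‖ := norm_pos_iff.2 fun h => by simp [h] at ht'
      refine hdom _ ?_ ?_
      · rw [norm_smul, norm_inv, norm_norm, inv_mul_cancel₀ hn.ne']
      · rw [real_inner_smul_right]
        positivity
  refine ⟨p, hpn, fun x hx y hy hxy hle => ?_⟩
  by_cases hxB : x ∈ B
  swap
  · rw [S.zero x hx hxB, S.zero y hy fun h => hxB (S.radial y x hxy.symm h)]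
  rcases eq_or_ne x y with rfl | hne
  · exact le_rfl
  -- `x` and `y` are exchanged by the reflection in the direction `x - y`
  have hd : 0 < ‖x - y‖ := norm_pos_iff.2 (sub_ne_zero.2 hne)
  set e := ‖x - y‖⁻¹ • (x - y) with he
  have hen : ‖e‖ = 1 := by rw [he, norm_smul, norm_inv, norm_norm, inv_mul_cancel₀ hd.ne']
  have hsq : 2 * ⟪x, x - y⟫ = ‖x - y‖ ^ 2 := by
    rw [norm_sub_sq_real, inner_sub_right, real_inner_self_eq_norm_sq, ← hxy]
    ring
  have hxe : 2 * ⟪x, e⟫ = ‖x - y‖ := by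
    rw [he, real_inner_smul_right]
    field_simp
    linarith
  have hrefl : reflHyp e x = y := by
    rw [reflHyp, hxe, he, smul_inv_smul₀ hd.ne']
    module
  have hpe : 0 ≤ ⟪p, e⟫ := by
    rw [he, real_inner_smul_right, inner_sub_right, real_inner_comm, real_inner_comm y p]
    exact mul_nonneg (by positivity) (by linarith)
  have := hdom' e hen hpe x ⟨hxB, by linarith⟩
  rwa [hrefl] at this

end RotSetup

/-! ### The difference equation -/

lemma sum_coord_smul_single (e : EuclideanSpace ℝ (Fin N)) :
    ∑ i, e i • EuclideanSpace.single i (1 : ℝ) = e := by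
  ext j
  simp [Finset.sum_apply, Pi.single_apply]

/-- The trace of a bilinear form is invariant under the reflection `σ_e`. -/
lemma sum_reflHyp_single {e : EuclideanSpace ℝ (Fin N)} (he : ‖e‖ = 1)
    (H : EuclideanSpace ℝ (Fin N) →L[ℝ] EuclideanSpace ℝ (Fin N) →L[ℝ] ℝ) :
    ∑ i, H (reflHyp e (EuclideanSpace.single i 1)) (reflHyp e (EuclideanSpace.single i 1)) =
      ∑ i, H (EuclideanSpace.single i 1) (EuclideanSpace.single i 1) := by
  have h1 : ∑ i, e i * H e (EuclideanSpace.single i 1) = H e e := by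
    conv_rhs => rw [← sum_coord_smul_single e, map_sum]
    rw [sum_coord_smul_single]
    simp
  have h2 : ∑ i, e i * H (EuclideanSpace.single i 1) e = H e e := by
    conv_rhs => enter [1]; rw [← sum_coord_smul_single e, map_sum]
    simp
  have h3 : ∑ i, e i ^ 2 * H e e = H e e := by
    rw [← Finset.sum_mul, sum_sq_eq_norm_sq, he]; ring
  have h4 : ∀ i, H (reflHyp e (EuclideanSpace.single i 1)) (reflHyp e (EuclideanSpace.single i 1))
      = H (EuclideanSpace.single i 1) (EuclideanSpace.single i 1)
        - 2 * (e i * H e (EuclideanSpace.single i 1))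
        - 2 * (e i * H (EuclideanSpace.single i 1) e) + 4 * (e i ^ 2 * H e e) := fun i => by
    simp [reflHyp, EuclideanSpace.inner_single_left]
    ring
  simp only [h4, Finset.sum_add_distrib, Finset.sum_sub_distrib, ← Finset.mul_sum, h1, h2, h3]
  ring

/-- `Δ(u - u ∘ σ_e) = Δu - (Δu) ∘ σ_e`. -/
lemma hasLap_diff {B : Set (EuclideanSpace ℝ (Fin N))} (hB : IsOpen B)
    {u : EuclideanSpace ℝ (Fin N) → ℝ}
    {Du : EuclideanSpace ℝ (Fin N) → (EuclideanSpace ℝ (Fin N) →L[ℝ] ℝ)}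
    {D2u : EuclideanSpace ℝ (Fin N) →
      (EuclideanSpace ℝ (Fin N) →L[ℝ] EuclideanSpace ℝ (Fin N) →L[ℝ] ℝ)}
    (hDu : ∀ x ∈ B, HasFDerivAt u (Du x) x) (hD2u : ∀ x ∈ B, HasFDerivAt Du (D2u x) x)
    {e x : EuclideanSpace ℝ (Fin N)} (he : ‖e‖ = 1) (hx : x ∈ B) (hσx : reflHyp e x ∈ B) :
    HasLap (fun y => u y - u (reflHyp e y)) x
      (∑ i, D2u x (EuclideanSpace.single i 1) (EuclideanSpace.single i 1) -
        ∑ i, D2u (reflHyp e x) (EuclideanSpace.single i 1) (EuclideanSpace.single i 1)) := by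
  have hline : ∀ (y c : EuclideanSpace ℝ (Fin N)) (t : ℝ),
      HasDerivAt (fun t : ℝ => y + t • c) c t := fun y c t => by
    simpa using ((hasDerivAt_id t).smul_const c).const_add y
  have hfirst : ∀ y ∈ B, ∀ c, ∀ᶠ t in nhds (0 : ℝ),
      HasDerivAt (fun t : ℝ => u (y + t • c)) (Du (y + t • c) c) t := fun y hy c => by
    have hc : ContinuousAt (fun t : ℝ => y + t • c) 0 := by fun_prop
    filter_upwards [hc.preimage_mem_nhds (hB.mem_nhds (by simpa using hy))] with t ht
    exact (hDu _ ht).comp_hasDerivAt t (hline y c t)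
  have hsecond : ∀ y ∈ B, ∀ c,
      HasDerivAt (fun t : ℝ => Du (y + t • c) c) (D2u y c c) 0 := fun y hy c => by
    have h0 : HasFDerivAt Du (D2u y) (y + (0 : ℝ) • c) := by simpa using hD2u y hy
    have h1 : HasDerivAt (fun t : ℝ => Du (y + t • c)) (D2u y c) 0 :=
      h0.comp_hasDerivAt 0 (hline y c 0)
    simpa using h1.clm_apply (hasDerivAt_const (0 : ℝ) c)
  have hlin : ∀ (c : EuclideanSpace ℝ (Fin N)) (t : ℝ),
      reflHyp e (x + t • c) = reflHyp e x + t • reflHyp e c := fun c t => by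
    simp only [reflHyp, inner_add_left, real_inner_smul_left]
    module
  rw [← sum_reflHyp_single he (D2u (reflHyp e x)), ← Finset.sum_sub_distrib]
  refine ⟨_, rfl, fun i => ⟨_, ?_, (hsecond x hx (EuclideanSpace.single i 1)).sub
    (hsecond _ hσx (reflHyp e (EuclideanSpace.single i 1)))⟩⟩
  filter_upwards [hfirst x hx (EuclideanSpace.single i 1),
    hfirst _ hσx (reflHyp e (EuclideanSpace.single i 1))] with t h1 h2
  simp only [hlin]
  exact h1.sub h2

/-- The geometric facts about a ball or annulus that the argument uses. -/
lemma IsRadialDomain.exists_radii {B : Set (EuclideanSpace ℝ (Fin N))} (hB : IsRadialDomain B) :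
    ∃ a R : ℝ, 0 ≤ a ∧ a < R ∧ IsOpen B ∧ (∀ x, a < ‖x‖ → ‖x‖ < R → x ∈ B) ∧
      (∀ x ∈ B, x ≠ 0 → a < ‖x‖ ∧ ‖x‖ < R) ∧ (∀ x ∈ closure B, a ≤ ‖x‖ ∧ ‖x‖ ≤ R) ∧
      ∀ x y, ‖x‖ = ‖y‖ → x ∈ B → y ∈ B := by
  rcases hB with ⟨R, hR, rfl⟩ | ⟨r, R, hr, hrR, rfl⟩
  · refine ⟨0, R, le_rfl, hR, isOpen_ball, fun x _ h => by simpa using h,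
      fun x hx h0 => ⟨norm_pos_iff.2 h0, by simpa using hx⟩,
      fun x hx => ⟨norm_nonneg x, by simpa using closure_ball_subset_closedBall hx⟩,
      fun x y h hx => ?_⟩
    rw [mem_ball_zero_iff] at *
    rwa [← h]
  · refine ⟨r, R, hr.le, hrR, ?_, fun x h1 h2 => ⟨h1, h2⟩, fun x hx _ => hx, fun x hx => ?_,
      fun x y h hx => ⟨h ▸ hx.1, h ▸ hx.2⟩⟩
    · exact (isOpen_lt continuous_const continuous_norm).inter
        (isOpen_lt continuous_norm continuous_const)
    · have hcl : IsClosed {x : EuclideanSpace ℝ (Fin N) | r ≤ ‖x‖ ∧ ‖x‖ ≤ R} :=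
        (isClosed_le continuous_const continuous_norm).inter
          (isClosed_le continuous_norm continuous_const)
      refine closure_minimal ?_ hcl hx
      rintro y ⟨h1, h2⟩
      exact ⟨h1.le, h2.le⟩

/-- Corollary `maincoro-simple`(i) of the paper:
a classical solution `u ∈ C(B̄) ∩ C²(B)` of the elliptic problem
`−Δu = f(|x|,u)` in `B`, `u = 0` on `∂B`, satisfying the reflection hypothesis
(U1), is foliated Schwarz symmetric with respect to some unit vector `p`.

The `C²` regularity is encoded via the differential `Du` and the second
differential `D2u`, continuous on `B`, and `Δu = ∑ i, D²u(eᵢ, eᵢ)`. -/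
theorem foliated_schwarz_symmetry_elliptic
    (N : ℕ) (hN : 2 ≤ N)
    (B : Set (EuclideanSpace ℝ (Fin N))) (hB : IsRadialDomain B)
    (f : ℝ → ℝ → ℝ)
    (Iset : Set ℝ) (hI : Iset = closure ((fun x : EuclideanSpace ℝ (Fin N) => ‖x‖) '' B))
    -- f is continuous in r and locally Lipschitz in u uniformly in r
    (hf_cont : ∀ s : ℝ, ContinuousOn (fun r : ℝ => f r s) Iset)
    (hf_lip : ∀ K > (0:ℝ), ∃ L > (0:ℝ), ∀ r ∈ Iset,
      ∀ u₁ ∈ Icc (-K) K, ∀ u₂ ∈ Icc (-K) K, |f r u₁ - f r u₂| ≤ L * |u₁ - u₂|)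
    -- the solution and its derivatives
    (u : EuclideanSpace ℝ (Fin N) → ℝ)
    (Du : EuclideanSpace ℝ (Fin N) → (EuclideanSpace ℝ (Fin N) →L[ℝ] ℝ))
    (D2u : EuclideanSpace ℝ (Fin N) →
      (EuclideanSpace ℝ (Fin N) →L[ℝ] EuclideanSpace ℝ (Fin N) →L[ℝ] ℝ))
    -- u ∈ C(B̄) ∩ C²(B)
    (hu_cont : ContinuousOn u (closure B))
    (hDu : ∀ x ∈ B, HasFDerivAt u (Du x) x)
    (hD2u : ∀ x ∈ B, HasFDerivAt Du (D2u x) x)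
    (hreg : ContinuousOn D2u B)
    -- the equation −Δu = f(|x|,u) in B
    (hPDE : ∀ x ∈ B,
      -(∑ i, D2u x (EuclideanSpace.single i 1) (EuclideanSpace.single i 1)) = f ‖x‖ (u x))
    -- the boundary condition u = 0 on ∂B
    (hbc : ∀ x ∈ frontier B, u x = 0)
    -- (U1): reflection inequality
    (hU1 : ∃ e : EuclideanSpace ℝ (Fin N), ‖e‖ = 1 ∧
      (∀ x ∈ halfDom B e, u (reflHyp e x) ≤ u x) ∧
      (∃ x ∈ halfDom B e, u (reflHyp e x) ≠ u x)) :
    ∃ p : EuclideanSpace ℝ (Fin N), ‖p‖ = 1 ∧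
      FoliatedSchwarzOn (closure B) u p := by
  obtain ⟨a, R, ha, haR, hopen, hmem, hofmem, hofcl, hrad⟩ := hB.exists_radii
  have hcomp : IsCompact (closure B) := Metric.isCompact_of_isClosed_isBounded isClosed_closure
    (isBounded_iff_forall_norm_le.2 ⟨R, fun x hx => (hofcl x hx).2⟩)
  obtain ⟨K, hK⟩ := hcomp.exists_bound_of_continuousOn hu_cont
  have hKB : ∀ x ∈ B, u x ∈ Icc (-(|K| + 1)) (|K| + 1) := fun x hx => by
    have h1 := hK x (subset_closure hx)
    rw [Real.norm_eq_abs] at h1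
    exact abs_le.1 (by linarith [le_abs_self K])
  obtain ⟨L, hL, hlip⟩ := hf_lip (|K| + 1) (by positivity)
  have S : RotSetup B a R L u :=
    { a_nonneg := ha
      a_lt := haR
      L_nonneg := hL.le
      isOpen := hopen
      mem_of := hmem
      of_mem := hofmem
      of_mem_closure := hofcl
      radial := hrad
      cont := hu_cont
      zero := fun x hx hxB => hbc x ⟨hx, by rwa [hopen.interior_eq]⟩
      lap := fun x hx e he => by
        have hσ : reflHyp e x ∈ B := hrad x _ (reflHyp_norm he x).symm hx
        refine ⟨_, hasLap_diff hopen hDu hD2u he hx hσ, ?_⟩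
        have h1 := hPDE x hx
        have h2 := hPDE _ hσ
        rw [reflHyp_norm he] at h2
        have h3 := hlip ‖x‖ (by rw [hI]; exact subset_closure (mem_image_of_mem _ hx))
          _ (hKB x hx) _ (hKB _ hσ)
        rw [← h1, ← h2] at h3
        refine le_trans (le_of_eq ?_) h3
        rw [← abs_neg]
        congr 1
        ring }
  obtain ⟨e₀, he₀, hnn, x, hx, hne⟩ := hU1
  exact S.foliated he₀ ((S.pos_or_eq he₀ hnn).resolve_right fun h => hne (h x hx.1))

end
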